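/- Let G be a graph with X the projective toric subset it parameterizes, and let v_1 and v_2 be two distinct vertices of G not joined by any edge of G. Let G' be the graph with the same edge set as G obtained by identifying v_1 with v_2 (each edge of G keeps its endpoints, with v_1 and v_2 replaced by the merged vertex), and let X' be the projective toric subset parameterized by G'. Then reg(G) ≥ reg(G'). -/

import Mathlib

open MvPolynomial

/-- A finite multigraph without loops: each edge `e` has two distinct endpoints
`fst e` and `snd e`.  Multiple edges with the same endpoints are allowed. -/
structure Multigraph (V E : Type) : Type where
  fst : E → V
  snd : E → V
  ne : ∀ e, fst e ≠ snd e

namespace Multigraph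

variable {V E : Type}

/-- Vertex `v` is an endpoint of the edge `e`. -/
def Incident (G : Multigraph V E) (v : V) (e : E) : Prop :=
  G.fst e = v ∨ G.snd e = v

instance (G : Multigraph V E) [DecidableEq V] (v : V) : DecidablePred (G.Incident v) :=
  fun e => inferInstanceAs (Decidable (G.fst e = v ∨ G.snd e = v))

/-- The degree of a vertex: the number of edges incident to it. -/
noncomputable def degree (G : Multigraph V E) (v : V) : ℕ :=
  Nat.card {e : E // G.Incident v e}

/-- The graph has no isolated vertices. -/
def NoIsolated (G : Multigraph V E) : Prop :=
  ∀ v : V, ∃ e : E, G.Incident v e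

variable (K : Type) [Field K] [Fintype K]

/-- The point of the affine torus associated with an assignment `x` of nonzero
scalars to the vertices: its coordinate at an edge `e = {v,w}` is `x v * x w`. -/
def point (G : Multigraph V E) (x : V → Kˣ) : E → K :=
  fun e => (x (G.fst e) : K) * (x (G.snd e) : K)

/-- The projective toric subset `X` parameterized by `G`, realized as the set of
`Kˣ`-orbits (i.e. projective points) of the points `G.point K x`, `x : V → Kˣ`. -/
def toricSet (G : Multigraph V E) : Set (Set (E → K)) :=
  Set.range fun x : V → Kˣ => MulAction.orbit Kˣ (G.point K x)

/-- The vanishing ideal `I(X)` of the projective toric subset parameterized by `G`: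
the ideal of all polynomials each of whose homogeneous components vanishes at the
point `G.point K x` for every `x : V → Kˣ`. -/
def vanishingIdeal (G : Multigraph V E) : Ideal (MvPolynomial E K) where
  carrier := {f | ∀ (x : V → Kˣ) (d : ℕ), eval (G.point K x) (homogeneousComponent d f) = 0}
  zero_mem' := by intro x d; simp
  add_mem' := by
    intro a b ha hb x d
    rw [map_add, map_add, ha x d, hb x d, add_zero]
  smul_mem' := by
    intro c f hf x n
    rw [smul_eq_mul, ← sum_homogeneousComponent f, Finset.mul_sum, map_sum, map_sum]
    refine Finset.sum_eq_zero fun d _ => ?_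
    nth_rewrite 1 [← sum_homogeneousComponent c]
    rw [Finset.sum_mul, map_sum, map_sum]
    refine Finset.sum_eq_zero fun e _ => ?_
    have h1 : (homogeneousComponent e c * homogeneousComponent d f).IsHomogeneous (e + d) :=
      (homogeneousComponent_isHomogeneous e c).mul (homogeneousComponent_isHomogeneous d f)
    rw [homogeneousComponent_of_mem ((mem_homogeneousSubmodule _ _).mpr h1)]
    split_ifs
    · rw [map_mul, hf x d, mul_zero]
    · simp

/-- The Hilbert function of `S/I(X)`: the dimension over `K` of the degree-`d`
homogeneous component of the quotient, realized as the image of the space of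
degree-`d` homogeneous polynomials in the quotient. -/
noncomputable def hilbert (G : Multigraph V E) (d : ℕ) : ℕ :=
  Module.finrank K
    ((homogeneousSubmodule E K d).map (Ideal.Quotient.mkₐ K (G.vanishingIdeal K)).toLinearMap)

/-- The regularity `reg G`: the least `d` such that the Hilbert function of `S/I(X)`
at `d` equals the number of points of `X`. -/
noncomputable def reg (G : Multigraph V E) : ℕ :=
  sInf {d : ℕ | G.hilbert K d = (G.toricSet K).ncard}

/-- The graph obtained from `G` by deleting a vertex `v` and all edges incident
to it. -/
def deleteVert (G : Multigraph V E) (v : V) :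
    Multigraph {w : V // w ≠ v} {e : E // ¬ G.Incident v e} where
  fst e := ⟨G.fst e.1, fun h => e.2 (Or.inl h)⟩
  snd e := ⟨G.snd e.1, fun h => e.2 (Or.inr h)⟩
  ne e h := G.ne e.1 (congrArg Subtype.val h)

/-- The graph obtained from `G` by identifying the vertex `v₂` with the vertex `v₁`:
the edges are the same, and every endpoint equal to `v₂` is replaced by `v₁`.
This requires that `{v₁, v₂}` is a non-edge of `G`, so that no loops are created. -/
def identifyVert [DecidableEq V] (G : Multigraph V E) (v₁ v₂ : V) (h12 : v₁ ≠ v₂)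
    (h : ∀ e, ¬ (G.Incident v₁ e ∧ G.Incident v₂ e)) :
    Multigraph {w : V // w ≠ v₂} E where
  fst e := ⟨if G.fst e = v₂ then v₁ else G.fst e, by split_ifs with hh; exacts [h12, hh]⟩
  snd e := ⟨if G.snd e = v₂ then v₁ else G.snd e, by split_ifs with hh; exacts [h12, hh]⟩
  ne := by
    intro e heq
    rw [Subtype.ext_iff] at heq
    simp only at heq
    split_ifs at heq with h1 h2 h2
    · exact G.ne e (h1.trans h2.symm)
    · exact h e ⟨Or.inr heq.symm, Or.inl h1⟩
    · exact h e ⟨Or.inl heq, Or.inr h2⟩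
    · exact G.ne e heq

/-- The subgraph of `G` determined by a set `A` of edges of `G`, together with all
endpoints of those edges (so it has no isolated vertices). -/
def subgraph [DecidableEq V] (G : Multigraph V E) (A : Finset E) :
    Multigraph {v : V // ∃ e ∈ A, G.Incident v e} {e : E // e ∈ A} where
  fst e := ⟨G.fst e.1, e.1, e.2, Or.inl rfl⟩
  snd e := ⟨G.snd e.1, e.1, e.2, Or.inr rfl⟩
  ne e h := G.ne e.1 (congrArg Subtype.val h)

end Multigraph

/-- The vertex of the parallel composition of paths of lengths `k i` lying on the
`i`-th path at distance `j` from the common initial vertex:  `j = 0` gives the common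
initial vertex, `j = k i` the common terminal vertex, and `0 < j < k i` gives the
`j`-th interior vertex of the `i`-th path. -/
def pcVert {ι : Type} (k : ι → ℕ) (i : ι) (j : ℕ) :
    Bool ⊕ ((i : ι) × Fin (k i - 1)) :=
  if h0 : j = 0 then Sum.inl false
  else if h : j < k i then Sum.inr ⟨i, ⟨j - 1, by omega⟩⟩
  else Sum.inl true

/-- The parallel composition of the family of paths `P i` of lengths `k i` (`i : ι`):
the `i`-th path has `k i` edges indexed by `Fin (k i)`, its `j`-th edge joining the
vertices of the `i`-th path at distances `j` and `j + 1` from the common initial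
vertex.  All the initial vertices of the paths are identified to a single vertex and
all the terminal vertices are identified to a single vertex. -/
def parallelComp {ι : Type} (k : ι → ℕ) :
    Multigraph (Bool ⊕ ((i : ι) × Fin (k i - 1))) ((i : ι) × Fin (k i)) where
  fst e := pcVert k e.1 e.2.1
  snd e := pcVert k e.1 (e.2.1 + 1)
  ne := by
    rintro ⟨i, j⟩ h
    have hj := j.2
    simp only [pcVert] at h
    split_ifs at h <;> simp_all <;> omega

/-- The monomial `f i`: the product of the edges of the `i`-th path of the parallel
composition in odd positions (positions `1, 3, 5, ...`, i.e. indices `0, 2, 4, ...`). -/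
noncomputable def oddProd {ι : Type} (K : Type) [Field K] (k : ι → ℕ) (i : ι) :
    MvPolynomial ((i : ι) × Fin (k i)) K :=
  ∏ m : Fin ((k i + 1) / 2), X ⟨i, ⟨2 * m.1, by have := m.2; omega⟩⟩

/-- The monomial `g i`: the product of the edges of the `i`-th path of the parallel
composition in even positions (positions `2, 4, 6, ...`, i.e. indices `1, 3, 5, ...`). -/
noncomputable def evenProd {ι : Type} (K : Type) [Field K] (k : ι → ℕ) (i : ι) :
    MvPolynomial ((i : ι) × Fin (k i)) K :=
  ∏ m : Fin (k i / 2), X ⟨i, ⟨2 * m.1 + 1, by have := m.2; omega⟩⟩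

/-! Call a set of projective points *separated in degree `d`* if each of its points lies off some
degree-`d` hypersurface through all the others. Since `S/I(X)` in degree `d` is the image of the
evaluation of forms at the points of `X`, its dimension is `|X|` exactly when that evaluation is
surjective, that is, when `X` is separated in degree `d`. Separation passes to subsets, and `X'` is
the subset of `X` parameterized by the assignments with equal values at `v₁` and `v₂`; so every
degree in which `G` attains `|X|` is one in which `G'` attains `|X'|`. That `G` attains `|X|` at
all (otherwise `reg`, as an infimum over `ℕ`, would be the junk value `0`) follows by multiplying
linear forms that separate pairs of points. -/

section LinearAlgebra

theorem finrank_range_eq_of_ker_eq {R M N P : Type*} [Ring R] [AddCommGroup M] [AddCommGroup N]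
    [AddCommGroup P] [Module R M] [Module R N] [Module R P] {φ : M →ₗ[R] N} {ψ : M →ₗ[R] P}
    (h : LinearMap.ker φ = LinearMap.ker ψ) :
    Module.finrank R (LinearMap.range φ) = Module.finrank R (LinearMap.range ψ) :=
  (φ.quotKerEquivRange.symm ≪≫ₗ Submodule.quotEquivOfEq _ _ h ≪≫ₗ ψ.quotKerEquivRange).finrank_eq

theorem submodule_pi_eq_top_iff {ι K : Type*} [Finite ι] [DivisionRing K]
    {W : Submodule K (ι → K)} :
    W = ⊤ ↔ ∀ i, ∃ g ∈ W, g i ≠ 0 ∧ ∀ j ≠ i, g j = 0 := by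
  classical
  refine ⟨fun hW i => ⟨Pi.single i 1, hW ▸ Submodule.mem_top, by simp,
    fun j hj => Pi.single_eq_of_ne hj 1⟩, fun h => ?_⟩
  rw [eq_top_iff, ← (Pi.basisFun K ι).span_eq, Submodule.span_le]
  rintro _ ⟨i, rfl⟩
  obtain ⟨g, hgW, hgi, hg⟩ := h i
  have hsingle : Pi.basisFun K ι i = (g i)⁻¹ • g := by
    ext j
    by_cases hj : j = i
    · subst hj; simp [hgi]
    · simp [hj, hg j hj]
  exact hsingle ▸ W.smul_mem _ hgW

theorem orbit_units_eq_of_mem_span_singleton {K M : Type*} [DivisionRing K] [AddCommGroup M]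
    [Module K M] {p q : M} (hp : p ≠ 0) (h : p ∈ Submodule.span K {q}) :
    MulAction.orbit Kˣ p = MulAction.orbit Kˣ q := by
  obtain ⟨a, rfl⟩ := Submodule.mem_span_singleton.1 h
  have ha : a ≠ 0 := fun ha => hp (by rw [ha, zero_smul])
  exact MulAction.orbit_eq_iff.2 ⟨Units.mk0 a ha, rfl⟩

end LinearAlgebra

section Forms

variable {E K : Type*}

theorem eval_smul_of_isHomogeneous [CommSemiring K] {d : ℕ} {f : MvPolynomial E K}
    (hf : f.IsHomogeneous d) (c : K) (p : E → K) : eval (c • p) f = c ^ d * eval p f := by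
  rw [eval_eq, eval_eq, Finset.mul_sum]
  refine Finset.sum_congr rfl fun m hm => ?_
  have hdeg : ∑ e ∈ m.support, m e = d := by
    rw [← Finsupp.degree_apply, Finsupp.degree_eq_weight_one]
    exact hf (mem_support_iff.1 hm)
  simp only [Pi.smul_apply, smul_eq_mul, mul_pow, Finset.prod_mul_distrib,
    Finset.prod_pow_eq_pow_sum, hdeg]
  ring

theorem eval_eq_zero_iff_of_mem_orbit [CommSemiring K] {d : ℕ} {f : MvPolynomial E K}
    (hf : f.IsHomogeneous d) {p q : E → K} (hp : p ∈ MulAction.orbit Kˣ q) :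
    eval p f = 0 ↔ eval q f = 0 := by
  obtain ⟨c, rfl⟩ := hp
  change eval ((c : K) • q) f = 0 ↔ _
  rw [eval_smul_of_isHomogeneous hf, (c.isUnit.pow d).mul_right_eq_zero]

theorem exists_linearForm_of_notMem_span_singleton [Field K] {p q : E → K}
    (h : p ∉ Submodule.span K {q}) :
    ∃ f : MvPolynomial E K, f.IsHomogeneous 1 ∧ eval p f ≠ 0 ∧ eval q f = 0 := by
  by_cases hq : q = 0
  · obtain ⟨e, he⟩ : ∃ e, p e ≠ 0 := by
      by_contra! hp
      exact h ((funext hp : p = 0) ▸ zero_mem _)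
    exact ⟨X e, isHomogeneous_X K e, by simpa using he, by simp [hq]⟩
  obtain ⟨e₀, he₀⟩ := Function.ne_iff.1 hq
  obtain ⟨e, he⟩ : ∃ e, q e₀ * p e ≠ q e * p e₀ := by
    by_contra! hminor
    refine h (Submodule.mem_span_singleton.2 ⟨p e₀ / q e₀, funext fun e => ?_⟩)
    rw [Pi.smul_apply, smul_eq_mul, div_mul_eq_mul_div, div_eq_iff he₀]
    linear_combination -hminor e
  refine ⟨C (q e₀) * X e - C (q e) * X e₀,
    (isHomogeneous_C_mul_X _ _).sub (isHomogeneous_C_mul_X _ _), ?_, ?_⟩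
  · simpa [sub_ne_zero] using he
  · simp [mul_comm]

/-- Evaluation of the forms of degree `d` at a family of points. -/
noncomputable def evalForms [CommSemiring K] {ι : Type*} (p : ι → E → K) (d : ℕ) :
    homogeneousSubmodule E K d →ₗ[K] (ι → K) :=
  (LinearMap.pi fun i => (aeval (p i)).toLinearMap).domRestrict (homogeneousSubmodule E K d)

theorem evalForms_apply [CommSemiring K] {ι : Type*} (p : ι → E → K) (d : ℕ)
    (f : homogeneousSubmodule E K d) (i : ι) : evalForms p d f i = eval (p i) f.1 := by
  simp [evalForms, aeval_eq_eval]

theorem finrank_range_evalForms_eq_card_iff [Field K] {ι : Type*} [Finite ι] (p : ι → E → K)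
    (d : ℕ) :
    Module.finrank K (LinearMap.range (evalForms p d)) = Nat.card ι ↔
      ∀ i, ∃ f : MvPolynomial E K,
        f.IsHomogeneous d ∧ eval (p i) f ≠ 0 ∧ ∀ j ≠ i, eval (p j) f = 0 := by
  have := Fintype.ofFinite ι
  have hcard : Nat.card ι = Module.finrank K (ι → K) := by
    rw [Module.finrank_fintype_fun_eq_card, Nat.card_eq_fintype_card]
  have htop : Module.finrank K (LinearMap.range (evalForms p d)) = Nat.card ι ↔
      LinearMap.range (evalForms p d) = ⊤ :=
    hcard ▸ ⟨Submodule.eq_top_of_finrank_eq, fun h => by rw [h, finrank_top]⟩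
  rw [htop, submodule_pi_eq_top_iff]
  simp [evalForms_apply, and_left_comm]

/-- The projective points in `X`, each given as the set of its homogeneous coordinate vectors, are
separated by forms of degree `d`: for every point some form of degree `d` vanishes at all the other
points but not at it. Asking this of all coordinate vectors avoids choosing representatives. -/
def SeparatedInDegree [CommSemiring K] (X : Set (Set (E → K))) (d : ℕ) : Prop :=
  ∀ P ∈ X, ∃ f : MvPolynomial E K, f.IsHomogeneous d ∧ (∀ p ∈ P, eval p f ≠ 0) ∧
    ∀ Q ∈ X, Q ≠ P → ∀ q ∈ Q, eval q f = 0

theorem SeparatedInDegree.mono [CommSemiring K] {X Y : Set (Set (E → K))} {d : ℕ} (hXY : X ⊆ Y)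
    (hY : SeparatedInDegree Y d) : SeparatedInDegree X d := fun P hP =>
  let ⟨f, hf, hfP, hfY⟩ := hY P (hXY hP)
  ⟨f, hf, hfP, fun Q hQ => hfY Q (hXY hQ)⟩

theorem SeparatedInDegree.of_pairwise [CommSemiring K] [NoZeroDivisors K] [Nontrivial K]
    {X : Set (Set (E → K))} (hX : X.Finite)
    (h : ∀ P ∈ X, ∀ Q ∈ X, Q ≠ P → ∃ f : MvPolynomial E K,
      f.IsHomogeneous 1 ∧ (∀ p ∈ P, eval p f ≠ 0) ∧ ∀ q ∈ Q, eval q f = 0) :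
    SeparatedInDegree X (X.ncard - 1) := by
  classical
  intro P hP
  choose! F hF hFP hFQ using h P hP
  have mem_others {Q} : Q ∈ hX.toFinset.erase P ↔ Q ≠ P ∧ Q ∈ X := by simp
  refine ⟨∏ Q ∈ hX.toFinset.erase P, F Q, ?_, fun p hp => ?_, fun Q hQ hQP q hq => ?_⟩
  · have hdeg : ∑ _Q ∈ hX.toFinset.erase P, 1 = X.ncard - 1 := by
      rw [Finset.sum_const, smul_eq_mul, mul_one,
        Finset.card_erase_of_mem (hX.mem_toFinset.2 hP), Set.ncard_eq_toFinset_card X hX]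
    exact hdeg ▸ IsHomogeneous.prod _ F _ fun Q hQ => hF Q (mem_others.1 hQ).2 (mem_others.1 hQ).1
  · rw [map_prod, Finset.prod_ne_zero_iff]
    exact fun Q hQ => hFP Q (mem_others.1 hQ).2 (mem_others.1 hQ).1 p hp
  · rw [map_prod]
    exact Finset.prod_eq_zero (mem_others.2 ⟨hQP, hQ⟩) (hFQ Q hQ hQP q hq)

end Forms

namespace Multigraph

variable {V E : Type} (K : Type) [Field K] (G : Multigraph V E)

/-- A coordinate vector of a point of the projective toric subset, chosen among the parameterized
vectors `G.point K x`. -/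
noncomputable def rep (P : G.toricSet K) : E → K :=
  G.point K P.2.choose

theorem orbit_rep (P : G.toricSet K) : MulAction.orbit Kˣ (G.rep K P) = P :=
  P.2.choose_spec

theorem rep_mem (P : G.toricSet K) : G.rep K P ∈ P.1 :=
  G.orbit_rep K P ▸ MulAction.mem_orbit_self _

theorem eval_eq_zero_iff_eval_rep_eq_zero {d : ℕ} {f : MvPolynomial E K} (hf : f.IsHomogeneous d)
    (P : G.toricSet K) {p : E → K} (hp : p ∈ P.1) : eval p f = 0 ↔ eval (G.rep K P) f = 0 :=
  eval_eq_zero_iff_of_mem_orbit hf (G.orbit_rep K P ▸ hp)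

theorem mem_vanishingIdeal_iff_of_isHomogeneous {d : ℕ} {f : MvPolynomial E K}
    (hf : f.IsHomogeneous d) :
    f ∈ G.vanishingIdeal K ↔ ∀ x : V → Kˣ, eval (G.point K x) f = 0 := by
  refine ⟨fun h x => ?_, fun h x n => ?_⟩
  · simpa only [homogeneousComponent_of_mem hf, if_pos] using h x d
  · rw [homogeneousComponent_of_mem hf]
    split_ifs
    · exact h x
    · exact map_zero _

theorem mem_vanishingIdeal_iff_eval_rep {d : ℕ} {f : MvPolynomial E K} (hf : f.IsHomogeneous d) :
    f ∈ G.vanishingIdeal K ↔ ∀ P, eval (G.rep K P) f = 0 := by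
  rw [mem_vanishingIdeal_iff_of_isHomogeneous K G hf]
  exact ⟨fun h P => h _, fun h x => (eval_eq_zero_iff_eval_rep_eq_zero K G hf
    ⟨_, Set.mem_range_self x⟩ (MulAction.mem_orbit_self _)).2 (h _)⟩

theorem hilbert_eq_finrank_range_evalForms (d : ℕ) :
    G.hilbert K d = Module.finrank K (LinearMap.range (evalForms (G.rep K) d)) := by
  rw [hilbert, ← LinearMap.range_domRestrict]
  refine finrank_range_eq_of_ker_eq (Submodule.ext fun f => ?_)
  rw [LinearMap.mem_ker, LinearMap.mem_ker, funext_iff]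
  simpa [evalForms_apply, Ideal.Quotient.eq_zero_iff_mem] using
    mem_vanishingIdeal_iff_eval_rep K G f.2

variable {K G}

theorem hilbert_eq_ncard_iff (hX : (G.toricSet K).Finite) (d : ℕ) :
    G.hilbert K d = (G.toricSet K).ncard ↔ SeparatedInDegree (G.toricSet K) d := by
  have := hX.to_subtype
  rw [hilbert_eq_finrank_range_evalForms, ← Nat.card_coe_set_eq,
    finrank_range_evalForms_eq_card_iff]
  refine ⟨fun h P hP => ?_, fun h P => ?_⟩
  · obtain ⟨f, hf, hfP, hfQ⟩ := h ⟨P, hP⟩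
    exact ⟨f, hf, fun p hp => mt (eval_eq_zero_iff_eval_rep_eq_zero K G hf ⟨P, hP⟩ hp).1 hfP,
      fun Q hQ hQP q hq => (eval_eq_zero_iff_eval_rep_eq_zero K G hf ⟨Q, hQ⟩ hq).2
        (hfQ ⟨Q, hQ⟩ (Subtype.coe_ne_coe.1 hQP))⟩
  · obtain ⟨f, hf, hfP, hfQ⟩ := h P P.2
    exact ⟨f, hf, hfP _ (rep_mem K G P),
      fun Q hQP => hfQ Q Q.2 (Subtype.coe_ne_coe.2 hQP) _ (rep_mem K G Q)⟩

theorem point_notMem_span_singleton {x y : V → Kˣ}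
    (h : MulAction.orbit Kˣ (G.point K x) ≠ MulAction.orbit Kˣ (G.point K y)) :
    G.point K x ∉ Submodule.span K {G.point K y} := by
  refine fun hspan => h (orbit_units_eq_of_mem_span_singleton (fun hzero => h ?_) hspan)
  have : IsEmpty E := ⟨fun e => by simpa [point] using congrFun hzero e⟩
  rw [Subsingleton.elim (G.point K x) (G.point K y)]

theorem separatedInDegree_toricSet (hX : (G.toricSet K).Finite) :
    SeparatedInDegree (G.toricSet K) ((G.toricSet K).ncard - 1) := by
  refine SeparatedInDegree.of_pairwise hX ?_
  rintro _ ⟨x, rfl⟩ _ ⟨y, rfl⟩ hxy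
  obtain ⟨f, hf, hfx, hfy⟩ :=
    exists_linearForm_of_notMem_span_singleton (point_notMem_span_singleton hxy.symm)
  exact ⟨f, hf, fun p hp => mt (eval_eq_zero_iff_of_mem_orbit hf hp).1 hfx,
    fun q hq => (eval_eq_zero_iff_of_mem_orbit hf hq).2 hfy⟩

theorem hilbert_reg (hX : (G.toricSet K).Finite) :
    G.hilbert K (G.reg K) = (G.toricSet K).ncard :=
  Nat.sInf_mem (s := {d | G.hilbert K d = (G.toricSet K).ncard})
    ⟨_, (hilbert_eq_ncard_iff hX _).2 (separatedInDegree_toricSet hX)⟩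

theorem reg_le_of_toricSet_subset {W : Type} {H : Multigraph W E} (hG : (G.toricSet K).Finite)
    (hHG : H.toricSet K ⊆ G.toricSet K) : H.reg K ≤ G.reg K := by
  have hsep : SeparatedInDegree (G.toricSet K) (G.reg K) :=
    (hilbert_eq_ncard_iff hG _).1 (hilbert_reg hG)
  exact Nat.sInf_le ((hilbert_eq_ncard_iff (hG.subset hHG) _).2 (hsep.mono hHG))

theorem toricSet_identifyVert_subset [DecidableEq V] (v₁ v₂ : V) (h12 : v₁ ≠ v₂)
    (hne : ∀ e, ¬ (G.Incident v₁ e ∧ G.Incident v₂ e)) :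
    (G.identifyVert v₁ v₂ h12 hne).toricSet K ⊆ G.toricSet K := by
  rintro _ ⟨x, rfl⟩
  exact ⟨fun v => x ⟨if v = v₂ then v₁ else v, by split_ifs with h; exacts [h12, h]⟩, rfl⟩

end Multigraph

theorem reg_identifyVert_le_general
    {V E : Type} [DecidableEq V] (K : Type) [Field K]
    (G : Multigraph V E) (hX : (G.toricSet K).Finite) (v₁ v₂ : V) (h12 : v₁ ≠ v₂)
    (hne : ∀ e, ¬ (G.Incident v₁ e ∧ G.Incident v₂ e)) :
    (G.identifyVert v₁ v₂ h12 hne).reg K ≤ G.reg K :=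
  Multigraph.reg_le_of_toricSet_subset hX (Multigraph.toricSet_identifyVert_subset v₁ v₂ h12 hne)

/-- **Proposition 2.6.**  Let `v₁, v₂` be two distinct vertices of `G` not joined by
any edge, and let `G'` be the graph obtained by identifying `v₁` with `v₂`.  Then
`reg G ≥ reg G'`. -/
theorem reg_identifyVert_le
    {V E : Type} [Fintype V] [DecidableEq V] [Fintype E] [DecidableEq E]
    (K : Type) [Field K] [Fintype K]
    (G : Multigraph V E) (hG : G.NoIsolated) (v₁ v₂ : V) (h12 : v₁ ≠ v₂)
    (hne : ∀ e, ¬ (G.Incident v₁ e ∧ G.Incident v₂ e)) :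
    (G.identifyVert v₁ v₂ h12 hne).reg K ≤ G.reg K :=
  reg_identifyVert_le_general K G (Set.finite_range _) v₁ v₂ h12 hne
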